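/- arXiv:2101.09032 — 5 statements merged into one kernel-verified Lean document; each statement's English description precedes it below -/
import Mathlib

section
/- A trace τ over (T,X,V) is CC if and only if the transitive closure of po ∪ rf ∪ sto is irreflexive and the composition (po ∪ rf)⁺ ; cf is irreflexive, i.e. there are no transactions t1, t2 with (t1,t2) ∈ (po ∪ rf)⁺ and (t2,t1) ∈ cf. (Lemma 2 of the paper: a trace is possible under causal consistency iff arb0⁺ and vis0⁺;cf are acyclic.) -/
open scoped Classical

/-- A trace over `(T, X, V)`: transactions `T`, shared variables `X`, values `V`.
Each transaction has a read set `RS` with read values `rdval`, a write set `WS`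
with last-written values `wrval`; there is an initial transaction `t0`, a
program order `po`, per-variable read-from relations `rf x` and per-variable
store orders `sto x`. -/
structure TxnTrace (T X V : Type*) where
  RS : T → Set X
  WS : T → Set X
  rdval : T → X → V
  wrval : T → X → V
  t0 : T
  po : T → T → Prop
  rf : X → T → T → Prop
  sto : X → T → T → Prop

/-- a strict partial order: irreflexive and transitive binary relation -/
def StrictPartialRel {α : Type*} (r : α → α → Prop) : Prop :=
  (∀ a, ¬ r a a) ∧ ∀ a b c, r a b → r b c → r a c

/-- a strict total order -/
def StrictTotalRel {α : Type*} (r : α → α → Prop) : Prop :=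
  StrictPartialRel r ∧ ∀ a b, a ≠ b → r a b ∨ r b a

/-- axiom Prefix: `arb ; vis ⊆ vis` -/
def PrefixAx {α : Type*} (vis arb : α → α → Prop) : Prop :=
  ∀ a b c, arb a b → vis b c → vis a c

/-- `vis` is a strict partial order, `arb` a strict total order, `vis ⊆ arb` -/
def GoodPair {α : Type*} (vis arb : α → α → Prop) : Prop :=
  StrictPartialRel vis ∧ StrictTotalRel arb ∧ ∀ a b, vis a b → arb a b

namespace TxnTrace

variable {T X V : Type*} (τ : TxnTrace T X V)

/-- the well-formedness conditions of a trace -/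
structure WellFormed : Prop where
  rs_init : τ.RS τ.t0 = ∅
  ws_init : τ.WS τ.t0 = Set.univ
  po_irrefl : ∀ t, ¬ τ.po t t
  po_trans : ∀ a b c, τ.po a b → τ.po b c → τ.po a c
  po_init : ∀ t, t ≠ τ.t0 → τ.po τ.t0 t
  rf_wf : ∀ x t' t, τ.rf x t' t →
    t' ≠ t ∧ x ∈ τ.RS t ∧ x ∈ τ.WS t' ∧ τ.wrval t' x = τ.rdval t x
  rf_total : ∀ t x, x ∈ τ.RS t → ∃! t', τ.rf x t' t
  sto_dom : ∀ x a b, τ.sto x a b → x ∈ τ.WS a ∧ x ∈ τ.WS b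
  sto_irrefl : ∀ x a, ¬ τ.sto x a a
  sto_trans : ∀ x a b c, τ.sto x a b → τ.sto x b c → τ.sto x a c
  sto_total : ∀ x a b, x ∈ τ.WS a → x ∈ τ.WS b → a ≠ b → τ.sto x a b ∨ τ.sto x b a

/-- `rf = ⋃ x, rf x` -/
def rfR (a b : T) : Prop := ∃ x, τ.rf x a b

/-- `sto = ⋃ x, sto x` -/
def stoR (a b : T) : Prop := ∃ x, τ.sto x a b

/-- the conflict relation: `(t1,t3) ∈ cf` iff `t1 ≠ t3` and there are `x`, `t2`
with `(t2,t1) ∈ rf_x` and `(t2,t3) ∈ sto_x` -/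
def cf (a b : T) : Prop := a ≠ b ∧ ∃ x w, τ.rf x w a ∧ τ.sto x w b

/-- `vis0 = po ∪ rf` -/
def vis0 (a b : T) : Prop := τ.po a b ∨ τ.rfR a b

/-- `arb0 = po ∪ rf ∪ sto` -/
def arb0 (a b : T) : Prop := τ.po a b ∨ τ.rfR a b ∨ τ.stoR a b

/-- happens-before: `(po ∪ rf ∪ sto ∪ cf)⁺` -/
def hb : T → T → Prop := Relation.TransGen (fun a b => τ.arb0 a b ∨ τ.cf a b)

/-- axiom PoCo: `vis0⁺ ⊆ vis` -/
def PoCo (vis : T → T → Prop) : Prop := ∀ a b, Relation.TransGen τ.vis0 a b → vis a b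

/-- axiom CoArb: `arb0⁺ ⊆ arb` -/
def CoArb (arb : T → T → Prop) : Prop := ∀ a b, Relation.TransGen τ.arb0 a b → arb a b

/-- axiom RetVal: every read of `x` in `t` reads from the `arb`-greatest
`vis`-predecessor of `t` writing `x` -/
def RetVal (vis arb : T → T → Prop) : Prop :=
  ∀ t x, x ∈ τ.RS t → ∃ t00,
    (vis t00 t ∧ x ∈ τ.WS t00) ∧
    (∀ t', vis t' t → x ∈ τ.WS t' → t' ≠ t00 → arb t' t00) ∧
    τ.rf x t00 t


/-- axiom Conflict: `sto ⊆ vis` -/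
def ConflictAx (vis : T → T → Prop) : Prop := ∀ a b, τ.stoR a b → vis a b


/-- causal consistency -/
def IsCC : Prop :=
  ∃ vis arb, GoodPair vis arb ∧ τ.PoCo vis ∧ τ.CoArb arb ∧ τ.RetVal vis arb

/-- prefix consistency -/
def IsPC : Prop :=
  ∃ vis arb, GoodPair vis arb ∧ τ.PoCo vis ∧ τ.CoArb arb ∧ τ.RetVal vis arb ∧
    PrefixAx vis arb

/-- snapshot isolation -/
def IsSI : Prop :=
  ∃ vis arb, GoodPair vis arb ∧ τ.PoCo vis ∧ τ.CoArb arb ∧ τ.RetVal vis arb ∧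
    PrefixAx vis arb ∧ τ.ConflictAx vis

/-- serializability: some strict total order `arb` with `arb0⁺ ⊆ arb` satisfies
RetVal with `vis = arb` -/
def IsSER : Prop :=
  ∃ arb, StrictTotalRel arb ∧ τ.CoArb arb ∧ τ.RetVal arb arb

/-- the read part `t_rd` of a transaction in the split trace -/
def rdPart (t : T) : T × Bool := (t, false)

/-- the write part `t_wr` of a transaction in the split trace;
the initial transaction `t0` is kept unchanged and plays both roles -/
noncomputable def wrPart (t : T) : T × Bool := if t = τ.t0 then (t, false) else (t, true)

/-- the split trace `τ_split`: every transaction `t ≠ t0` is split into a read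
part `t_rd` and a write part `t_wr`; `po'` is the smallest transitive relation
containing `(t_rd, t_wr)` for every split `t` and `(u_wr, v_rd)` for `(u,v) ∈ po`;
`rf'_x = {(u_wr, v_rd) : (u,v) ∈ rf_x}`; `sto'_x = {(u_wr, v_wr) : (u,v) ∈ sto_x}`.
(The pair `(t0, true)` is an unused dummy element with empty read and write sets and
no incident relations.) -/
noncomputable def split : TxnTrace (T × Bool) X V where
  RS p := if p = rdPart p.1 then τ.RS p.1 else ∅
  WS p := if p = τ.wrPart p.1 then τ.WS p.1 else ∅
  rdval p x := τ.rdval p.1 x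
  wrval p x := τ.wrval p.1 x
  t0 := (τ.t0, false)
  po := Relation.TransGen (fun a b =>
    (∃ t, t ≠ τ.t0 ∧ a = rdPart t ∧ b = τ.wrPart t) ∨
    (∃ u v, τ.po u v ∧ a = τ.wrPart u ∧ b = rdPart v))
  rf := fun x a b => ∃ u v, τ.rf x u v ∧ a = τ.wrPart u ∧ b = rdPart v
  sto := fun x a b => ∃ u v, τ.sto x u v ∧ a = τ.wrPart u ∧ b = τ.wrPart v

end TxnTrace

/-!
Once `rf ⊆ vis` and `sto ⊆ arb`, the axiom `RetVal` fails exactly when some transaction sees a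
writer that overwrites, in the store order, a value it read, that is, when `vis ; cf` has a loop.
Shrinking `vis` only removes such loops, so the best choice is `vis = (po ∪ rf)⁺`, and `arb` can
then be any linear extension of `(po ∪ rf ∪ sto)⁺`.
-/

theorem StrictPartialRel.exists_le_strictTotalRel {α : Type*} {r : α → α → Prop}
    (hr : StrictPartialRel r) : ∃ s, StrictTotalRel s ∧ r ≤ s := by
  have : IsStrictOrder α r := { irrefl := hr.1, trans := hr.2 }
  let _ : PartialOrder α := partialOrderOfSO r
  have inj : Function.Injective (toLinearExtension : α → LinearExtension α) := fun _ _ h => h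
  have mono : StrictMono (toLinearExtension : α → LinearExtension α) :=
    toLinearExtension.monotone.strictMono_of_injective inj
  exact ⟨fun a b => toLinearExtension a < toLinearExtension b,
    ⟨⟨fun _ => lt_irrefl _, fun _ _ _ => lt_trans⟩, fun _ _ hab => (inj.ne hab).lt_or_gt⟩,
    fun _ _ hab => mono hab⟩

namespace TxnTrace

variable {T X V : Type*} {τ : TxnTrace T X V} {vis arb : T → T → Prop}

theorem vis0_le_arb0 : τ.vis0 ≤ τ.arb0 := fun _ _ => Or.imp_right Or.inl

theorem PoCo.rfR_le (h : τ.PoCo vis) : τ.rfR ≤ vis :=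
  fun a b hab => h a b (.single (.inr hab))

theorem CoArb.stoR_le (h : τ.CoArb arb) : τ.stoR ≤ arb :=
  fun a b hab => h a b (.single (.inr (.inr hab)))

theorem RetVal.not_cf (hret : τ.RetVal vis arb) (hwf : τ.WellFormed)
    (harb : StrictPartialRel arb) (hsto : τ.stoR ≤ arb) {t u : T} (hut : vis u t) :
    ¬ τ.cf t u := by
  rintro ⟨-, x, w, hwt, hwu⟩
  have hxt : x ∈ τ.RS t := (hwf.rf_wf x w t hwt).2.1
  obtain ⟨w', -, hmax, hw't⟩ := hret t x hxt
  obtain rfl : w' = w := (hwf.rf_total t x hxt).unique hw't hwt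
  have hne : u ≠ w' := by
    rintro rfl
    exact hwf.sto_irrefl x u hwu
  have huw : arb u w' := hmax u hut (hwf.sto_dom x w' u hwu).2 hne
  exact harb.1 u (harb.2 u w' u huw (hsto w' u ⟨x, hwu⟩))

theorem retVal_of_not_cf (hwf : τ.WellFormed) (hvis : ∀ t, ¬ vis t t) (hrf : τ.rfR ≤ vis)
    (hsto : τ.stoR ≤ arb) (hcf : ∀ t u, vis u t → ¬ τ.cf t u) : τ.RetVal vis arb := by
  intro t x hxt
  obtain ⟨w, hwt, -⟩ := hwf.rf_total t x hxt
  have hxw : x ∈ τ.WS w := (hwf.rf_wf x w t hwt).2.2.1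
  refine ⟨w, ⟨hrf w t ⟨x, hwt⟩, hxw⟩, fun u hut hxu hne => ?_, hwt⟩
  have htu : t ≠ u := by
    rintro rfl
    exact hvis t hut
  have hwu : ¬ τ.sto x w u := fun hwu => hcf t u hut ⟨htu, x, w, hwt, hwu⟩
  exact hsto u w ⟨x, (hwf.sto_total x u w hxu hxw hne).resolve_right hwu⟩

end TxnTrace

open Relation TxnTrace in
theorem cc_iff_acyclic_general {T X V : Type*} (τ : TxnTrace T X V) (hwf : τ.WellFormed) :
    τ.IsCC ↔
      ((∀ t, ¬ TransGen τ.arb0 t t) ∧ ∀ t1 t2, TransGen τ.vis0 t1 t2 → ¬ τ.cf t2 t1) := by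
  constructor
  · rintro ⟨vis, arb, ⟨-, harb, -⟩, hpo, hco, hret⟩
    exact ⟨fun t ht => harb.1.1 t (hco t t ht),
      fun u t hut => hret.not_cf hwf harb.1 hco.stoR_le (hpo u t hut)⟩
  · rintro ⟨hacyc, hcf⟩
    have hle : TransGen τ.vis0 ≤ TransGen τ.arb0 := TransGen.mono vis0_le_arb0
    have hirrefl : ∀ t, ¬ TransGen τ.vis0 t t := fun t ht => hacyc t (hle t t ht)
    have hstrict : StrictPartialRel (TransGen τ.arb0) := ⟨hacyc, fun _ _ _ => .trans⟩
    obtain ⟨arb, harb, hco : τ.CoArb arb⟩ := hstrict.exists_le_strictTotalRel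
    have hpo : τ.PoCo (TransGen τ.vis0) := fun _ _ => id
    have hgood : GoodPair (TransGen τ.vis0) arb :=
      ⟨⟨hirrefl, fun _ _ _ => .trans⟩, harb, hle.trans hco⟩
    exact ⟨_, arb, hgood, hpo, hco,
      retVal_of_not_cf hwf hirrefl hpo.rfR_le hco.stoR_le fun t u => hcf u t⟩

/-- Lemma 2: a trace is CC iff `(po ∪ rf ∪ sto)⁺` is irreflexive
and `(po ∪ rf)⁺ ; cf` is irreflexive. -/
theorem cc_iff_acyclic {T X V : Type*} [Fintype T] (τ : TxnTrace T X V)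
    (hwf : τ.WellFormed) :
    τ.IsCC ↔
      ((∀ t, ¬ Relation.TransGen τ.arb0 t t) ∧
       ∀ t1 t2, Relation.TransGen τ.vis0 t1 t2 → ¬ τ.cf t2 t1) :=
  cc_iff_acyclic_general τ hwf
end

section
/- Let τ be a trace over (T,X,V), vis a strict partial order on T and arb a strict total order on T with vis ⊆ arb, satisfying PoCo and CoArb. Then the axiom RetVal holds for (vis,arb) if and only if vis ; cf is irreflexive, i.e. there are no transactions t1, t2 with (t1,t2) ∈ vis and (t2,t1) ∈ cf. (Claim used in the proofs of Lemmas 2 and 5: 'the axiom RetVal is equivalent to the acyclicity of vis;cf when PoCo and CoArb hold'.) -/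
open scoped Classical

/-!
By `PoCo` the transaction a read reads from is visible to it, so `RetVal` only asks that this
transaction be the `arb`-greatest among the visible writers of the variable. By `CoArb` and
asymmetry, `arb` agrees with `sto x` on the writers of `x`; hence `RetVal` fails at a read exactly
when some visible writer lies `sto x`-above the transaction read from, and such a writer is a
`cf`-successor of the reader that is visible to it.
-/

theorem StrictPartialRel.asymm {α : Type*} {r : α → α → Prop} (hr : StrictPartialRel r) {a b : α}
    (hab : r a b) : ¬ r b a :=
  fun hba => hr.1 a (hr.2 a b a hab hba)

namespace TxnTrace

variable {T X V : Type*} {τ : TxnTrace T X V} {vis arb : T → T → Prop}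

theorem PoCo.vis_of_rf (hpoco : τ.PoCo vis) {x : X} {a b : T} (h : τ.rf x a b) : vis a b :=
  hpoco a b (.single (.inr ⟨x, h⟩))

theorem CoArb.arb_of_sto (hcoarb : τ.CoArb arb) {x : X} {a b : T} (h : τ.sto x a b) : arb a b :=
  hcoarb a b (.single (.inr (.inr ⟨x, h⟩)))

theorem WellFormed.ne_of_sto (hwf : τ.WellFormed) {x : X} {a b : T} (h : τ.sto x a b) : a ≠ b := by
  rintro rfl
  exact hwf.sto_irrefl x a h

theorem WellFormed.mem_RS_of_rf (hwf : τ.WellFormed) {x : X} {w t : T} (h : τ.rf x w t) :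
    x ∈ τ.RS t :=
  (hwf.rf_wf x w t h).2.1

theorem WellFormed.mem_WS_of_rf (hwf : τ.WellFormed) {x : X} {w t : T} (h : τ.rf x w t) :
    x ∈ τ.WS w :=
  (hwf.rf_wf x w t h).2.2.1

theorem WellFormed.retVal_iff_forall_rf (hwf : τ.WellFormed)
    (hrf : ∀ ⦃x a b⦄, τ.rf x a b → vis a b) :
    τ.RetVal vis arb ↔
      ∀ x w t u, τ.rf x w t → vis u t → x ∈ τ.WS u → u ≠ w → arb u w := by
  constructor
  · intro hret x w t u hw
    have hx := hwf.mem_RS_of_rf hw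
    obtain ⟨w', _, hmax, hw'⟩ := hret t x hx
    obtain rfl : w' = w := (hwf.rf_total t x hx).unique hw' hw
    exact hmax u
  · intro h t x hx
    obtain ⟨w, hw⟩ := (hwf.rf_total t x hx).exists
    exact ⟨w, ⟨hrf hw, hwf.mem_WS_of_rf hw⟩, fun u => h x w t u hw, hw⟩

theorem vis_cf_irrefl_iff_forall_rf (hvis : ∀ t, ¬ vis t t) :
    (∀ u t, vis u t → ¬ τ.cf t u) ↔ ∀ x w t u, τ.rf x w t → vis u t → ¬ τ.sto x w u := by
  constructor
  · intro h x w t u hw hut hs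
    have hne : t ≠ u := by
      rintro rfl
      exact hvis t hut
    exact h u t hut ⟨hne, x, w, hw, hs⟩
  · rintro h u t hut ⟨-, x, w, hw, hs⟩
    exact h x w t u hw hut hs

theorem WellFormed.arb_iff_not_sto (hwf : τ.WellFormed)
    (harb : ∀ ⦃a b⦄, arb a b → ¬ arb b a) (hsto : ∀ ⦃x a b⦄, τ.sto x a b → arb a b)
    {x : X} {a b : T} (ha : x ∈ τ.WS a) (hb : x ∈ τ.WS b) (hne : a ≠ b) :
    arb a b ↔ ¬ τ.sto x b a := by
  constructor
  · exact fun hab hba => harb hab (hsto hba)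
  · exact fun hba => hsto ((hwf.sto_total x a b ha hb hne).resolve_right hba)

end TxnTrace

theorem retVal_iff_vis_cf_irrefl_general {T X V : Type*} {τ : TxnTrace T X V}
    (hwf : τ.WellFormed) {vis arb : T → T → Prop}
    (hvis : ∀ t, ¬ vis t t) (harb : ∀ ⦃a b⦄, arb a b → ¬ arb b a)
    (hrf : ∀ ⦃x a b⦄, τ.rf x a b → vis a b) (hsto : ∀ ⦃x a b⦄, τ.sto x a b → arb a b) :
    τ.RetVal vis arb ↔ ∀ t1 t2, vis t1 t2 → ¬ τ.cf t2 t1 := by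
  rw [hwf.retVal_iff_forall_rf hrf, TxnTrace.vis_cf_irrefl_iff_forall_rf hvis]
  refine forall₄_congr fun x w t u => forall₂_congr fun hw _ => ?_
  have hxw : x ∈ τ.WS w := hwf.mem_WS_of_rf hw
  constructor
  · intro h hs
    have hxu : x ∈ τ.WS u := (hwf.sto_dom x w u hs).2
    have hne : u ≠ w := (hwf.ne_of_sto hs).symm
    exact (hwf.arb_iff_not_sto harb hsto hxu hxw hne).1 (h hxu hne) hs
  · exact fun h hxu hne => (hwf.arb_iff_not_sto harb hsto hxu hxw hne).2 h

/-- under PoCo and CoArb, RetVal holds iff `vis ; cf` is irreflexive. -/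
theorem retVal_iff_vis_cf_irrefl {T X V : Type*} [Fintype T] (τ : TxnTrace T X V)
    (hwf : τ.WellFormed) (vis arb : T → T → Prop)
    (hvis : StrictPartialRel vis) (harb : StrictTotalRel arb)
    (hsub : ∀ a b, vis a b → arb a b)
    (hpoco : τ.PoCo vis) (hcoarb : τ.CoArb arb) :
    τ.RetVal vis arb ↔ ∀ t1 t2, vis t1 t2 → ¬ τ.cf t2 t1 :=
  retVal_iff_vis_cf_irrefl_general hwf hvis.1 (fun _ _ => harb.1.asymm)
    (fun _ _ _ => hpoco.vis_of_rf) (fun _ _ _ => hcoarb.arb_of_sto)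
end

section
/- If a trace τ over (T,X,V) is CC, then its split trace τ_split is CC. (Lemma 1 of the paper, case X = CC.) -/
open scoped Classical

/-!
Order the parts of the split trace lexicographically: first by the transactions they come from,
then read part before write part. Lifting `vis` and `arb` this way preserves strict partial and
strict total orders. Every `po'`, `rf'` or `sto'` step either goes up between transactions or
goes from the read part to the write part of the same one, so it is contained in the lift. Finally
a part precedes `t_rd` in the lift exactly when its transaction precedes `t`, so a read sees in
the split trace the same writers, in the same arbitration order, as it does in `τ`.
-/

section StrictOrders

variable {α β : Type*} {r r' : α → α → Prop} {s : β → β → Prop}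

theorem strictPartialRel_iff_isStrictOrder : StrictPartialRel r ↔ IsStrictOrder α r :=
  ⟨fun ⟨hirrefl, htrans⟩ => { irrefl := hirrefl, trans := htrans },
    fun h => ⟨h.irrefl, h.trans⟩⟩

theorem StrictPartialRel.prodLex (hr : StrictPartialRel r) (hs : StrictPartialRel s) :
    StrictPartialRel (Prod.Lex r s) := by
  rw [strictPartialRel_iff_isStrictOrder] at hr hs ⊢
  exact {}

theorem StrictTotalRel.prodLex (hr : StrictTotalRel r) (hs : StrictTotalRel s) :
    StrictTotalRel (Prod.Lex r s) := by
  refine ⟨hr.1.prodLex hs.1, ?_⟩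
  rintro ⟨a, b⟩ ⟨a', b'⟩ hne
  by_cases ha : a = a'
  · subst ha
    have hb : b ≠ b' := fun hb => hne (congrArg (Prod.mk a) hb)
    exact (hs.2 b b' hb).imp (.right a) (.right a)
  · exact (hr.2 a a' ha).imp (.left b b') (.left b' b)

theorem prodLex_mono_left (h : r ≤ r') : Prod.Lex r s ≤ Prod.Lex r' s := by
  rintro _ _ (⟨_, _, hr⟩ | ⟨_, hs⟩)
  · exact .left _ _ (h _ _ hr)
  · exact .right _ hs

theorem GoodPair.prodLex (h : GoodPair r r') (hs : StrictTotalRel s) :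
    GoodPair (Prod.Lex r s) (Prod.Lex r' s) :=
  ⟨h.1.prodLex hs.1, h.2.1.prodLex hs, prodLex_mono_left h.2.2⟩

theorem strictTotalRel_lt [LinearOrder α] : StrictTotalRel ((· < ·) : α → α → Prop) :=
  ⟨⟨lt_irrefl, fun _ _ _ => lt_trans⟩, fun _ _ => lt_or_gt_of_ne⟩

end StrictOrders

namespace TxnTrace

section PartLex

variable {T : Type*} {r : T → T → Prop}

/-- The lift of a relation on transactions to their read and write parts: parts of different
transactions compare as the transactions do, and a read part precedes the write part of the same
transaction (`false < true` in `Bool`). -/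
abbrev partLex (r : T → T → Prop) : T × Bool → T × Bool → Prop :=
  Prod.Lex r (· < ·)

theorem partLex_of_fst {p q : T × Bool} (h : r p.1 q.1) : partLex r p q :=
  Prod.lex_iff.2 (.inl h)

theorem partLex_rdPart_right_iff {p : T × Bool} {t : T} :
    partLex r p (rdPart t) ↔ r p.1 t := by
  simp [Prod.lex_iff, rdPart]

end PartLex

variable {T X V : Type*} {τ : TxnTrace T X V} {r vis arb : T → T → Prop}

theorem fst_wrPart (t : T) : (τ.wrPart t).1 = t := by
  unfold wrPart
  split_ifs <;> rfl

theorem mem_split_RS_iff {p : T × Bool} {x : X} :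
    x ∈ τ.split.RS p ↔ ∃ t, p = rdPart t ∧ x ∈ τ.RS t := by
  obtain ⟨t, b⟩ := p
  simp [split, rdPart, and_comm]

theorem mem_split_WS_iff {p : T × Bool} {x : X} :
    x ∈ τ.split.WS p ↔ ∃ t, p = τ.wrPart t ∧ x ∈ τ.WS t := by
  constructor
  · intro hx
    by_cases hp : p = τ.wrPart p.1
    · exact ⟨p.1, hp, by simpa only [split, if_pos hp] using hx⟩
    · simp only [split, if_neg hp, Set.mem_empty_iff_false] at hx
  · rintro ⟨t, rfl, hx⟩
    simpa only [split, fst_wrPart, if_true] using hx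

theorem partLex_rdPart_wrPart {t : T} (ht : t ≠ τ.t0) : partLex r (rdPart t) (τ.wrPart t) := by
  rw [wrPart, if_neg ht]
  exact .right t Bool.false_lt_true

theorem partLex_wrPart_rdPart {u v : T} (h : r u v) : partLex r (τ.wrPart u) (rdPart v) :=
  partLex_rdPart_right_iff.2 (by rwa [fst_wrPart])

theorem partLex_wrPart_wrPart {u v : T} (h : r u v) : partLex r (τ.wrPart u) (τ.wrPart v) :=
  partLex_of_fst (by rwa [fst_wrPart, fst_wrPart])

theorem split_po_le_partLex [IsTrans T r] (h : τ.po ≤ r) : τ.split.po ≤ partLex r := by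
  refine Relation.transGen_minimal ?_
  rintro _ _ (⟨t, ht, rfl, rfl⟩ | ⟨u, v, huv, rfl, rfl⟩)
  · exact partLex_rdPart_wrPart ht
  · exact partLex_wrPart_rdPart (h u v huv)

theorem split_rfR_le_partLex (h : τ.rfR ≤ r) : τ.split.rfR ≤ partLex r := by
  rintro _ _ ⟨x, u, v, huv, rfl, rfl⟩
  exact partLex_wrPart_rdPart (h u v ⟨x, huv⟩)

theorem split_stoR_le_partLex (h : τ.stoR ≤ r) : τ.split.stoR ≤ partLex r := by
  rintro _ _ ⟨x, u, v, huv, rfl, rfl⟩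
  exact partLex_wrPart_wrPart (h u v ⟨x, huv⟩)

theorem split_vis0_le_partLex [IsTrans T r] (h : τ.vis0 ≤ r) : τ.split.vis0 ≤ partLex r := by
  rintro p q (hpo | hrf)
  · exact split_po_le_partLex (fun u v huv => h u v (.inl huv)) p q hpo
  · exact split_rfR_le_partLex (fun u v huv => h u v (.inr huv)) p q hrf

theorem split_arb0_le_partLex [IsTrans T r] (h : τ.arb0 ≤ r) : τ.split.arb0 ≤ partLex r := by
  rintro p q (hpo | hrf | hsto)
  · exact split_po_le_partLex (fun u v huv => h u v (.inl huv)) p q hpo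
  · exact split_rfR_le_partLex (fun u v huv => h u v (.inr (.inl huv))) p q hrf
  · exact split_stoR_le_partLex (fun u v huv => h u v (.inr (.inr huv))) p q hsto

theorem PoCo.split (h : τ.PoCo vis) : τ.split.PoCo (partLex vis) :=
  calc Relation.TransGen τ.split.vis0
    _ ≤ partLex (Relation.TransGen τ.vis0) :=
      Relation.transGen_minimal (split_vis0_le_partLex fun _ _ => .single)
    _ ≤ partLex vis := prodLex_mono_left h

theorem CoArb.split (h : τ.CoArb arb) : τ.split.CoArb (partLex arb) :=
  calc Relation.TransGen τ.split.arb0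
    _ ≤ partLex (Relation.TransGen τ.arb0) :=
      Relation.transGen_minimal (split_arb0_le_partLex fun _ _ => .single)
    _ ≤ partLex arb := prodLex_mono_left h

theorem RetVal.split (h : τ.RetVal vis arb) : τ.split.RetVal (partLex vis) (partLex arb) := by
  intro p x hx
  obtain ⟨t, rfl, hxt⟩ := mem_split_RS_iff.1 hx
  obtain ⟨w, ⟨hvis, hxw⟩, hmax, hrf⟩ := h t x hxt
  refine ⟨τ.wrPart w, ⟨partLex_wrPart_rdPart hvis, mem_split_WS_iff.2 ⟨w, rfl, hxw⟩⟩, ?_,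
    w, t, hrf, rfl, rfl⟩
  intro q hq hxq hne
  obtain ⟨u, rfl, hxu⟩ := mem_split_WS_iff.1 hxq
  have hut : vis u t := by rwa [partLex_rdPart_right_iff, fst_wrPart] at hq
  have huw : u ≠ w := ne_of_apply_ne τ.wrPart hne
  exact partLex_wrPart_wrPart (hmax u hut hxu huw)

end TxnTrace

theorem split_preserves_cc_general {T X V : Type*} (τ : TxnTrace T X V) (h : τ.IsCC) :
    τ.split.IsCC := by
  obtain ⟨vis, arb, hgood, hpoCo, hcoArb, hretVal⟩ := h
  exact ⟨TxnTrace.partLex vis, TxnTrace.partLex arb, hgood.prodLex strictTotalRel_lt,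
    hpoCo.split, hcoArb.split, hretVal.split⟩

/-- Lemma 1, case CC: if a trace is CC then its split trace is CC. -/
theorem split_preserves_cc {T X V : Type*} [Fintype T] (τ : TxnTrace T X V)
    (hwf : τ.WellFormed) (h : τ.IsCC) : τ.split.IsCC :=
  split_preserves_cc_general τ h
end

section
/- Let τ be a trace over (T,X,V) that is PC and such that the transitive closure of (po ∪ rf ∪ sto) ∪ ((po ∪ rf ∪ sto) ; cf) is irreflexive (equivalently: every happens-before cycle of τ contains two successive cf dependencies). Then τ is SI. (Lemma 5 of the paper.) -/
open scoped Classical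

/-! Extend `(po ∪ rf ∪ sto) ∪ (po ∪ rf ∪ sto);cf` to a strict total order `arb` and put
`vis := arb^=;(po ∪ rf ∪ sto)`, where `arb^=` is the reflexive closure of `arb`. If RetVal failed,
some `t'` visible to `t` would overwrite a value read by `t`, so that `(t, t') ∈ cf`. Visibility
provides `b` with `(t', b) ∈ arb^=` and `(b, t) ∈ po ∪ rf ∪ sto`, hence
`(b, t') ∈ (po ∪ rf ∪ sto);cf ⊆ arb`, which contradicts the irreflexivity of `arb`. -/

theorem exists_strictTotalRel_of_acyclic {α : Type*} {r : α → α → Prop}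
    (hr : ∀ a, ¬ Relation.TransGen r a a) :
    ∃ s, StrictTotalRel s ∧ ∀ a b, r a b → s a b := by
  have : IsStrictOrder α (Relation.TransGen r) :=
    { irrefl := hr, trans := fun _ _ _ => Relation.TransGen.trans }
  let _ : PartialOrder α := partialOrderOfSO (Relation.TransGen r)
  let f : α → LinearExtension α := toLinearExtension
  have hinj : Function.Injective f := Function.injective_id
  have hmono : StrictMono f := toLinearExtension.monotone.strictMono_of_injective hinj
  exact ⟨fun a b => f a < f b,
    ⟨⟨fun _ => lt_irrefl _, fun _ _ _ => lt_trans⟩, fun _ _ hab => lt_or_gt_of_ne (hinj.ne hab)⟩,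
    fun _ _ hab => hmono (Relation.TransGen.single hab)⟩

theorem StrictPartialRel.isTrans {α : Type*} {r : α → α → Prop} (hr : StrictPartialRel r) :
    IsTrans α r :=
  ⟨hr.2⟩

/-- The composite `s^=;r` of the reflexive closure of `s` with `r`. For transitive `s` it is the
least relation `v` containing `r` with `s;v ⊆ v`: the least visibility relation that contains `r`
and satisfies Prefix for the arbitration order `s`. -/
def prefixClosure {α : Type*} (s r : α → α → Prop) : α → α → Prop :=
  Relation.Comp (Relation.ReflGen s) r

section prefixClosure

variable {α : Type*} {r s : α → α → Prop}

theorem prefixClosure_of_rel {a b : α} (hab : r a b) : prefixClosure s r a b :=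
  ⟨a, .refl, hab⟩

theorem prefixClosure_le [IsTrans α s] (hrs : ∀ a b, r a b → s a b) {a b : α}
    (hab : prefixClosure s r a b) : s a b := by
  obtain ⟨c, _ | hac, hcb⟩ := hab
  · exact hrs _ _ hcb
  · exact IsTrans.trans _ _ _ hac (hrs _ _ hcb)

theorem prefixAx_prefixClosure [IsTrans α s] : PrefixAx (prefixClosure s r) s := by
  rintro a b c hab ⟨d, _ | hbd, hdc⟩
  · exact ⟨b, .single hab, hdc⟩
  · exact ⟨d, .single (IsTrans.trans _ _ _ hab hbd), hdc⟩

theorem goodPair_prefixClosure (hs : StrictTotalRel s) (hrs : ∀ a b, r a b → s a b) :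
    GoodPair (prefixClosure s r) s := by
  have := hs.1.isTrans
  have hle : ∀ a b, prefixClosure s r a b → s a b := fun _ _ => prefixClosure_le hrs
  refine ⟨⟨fun a haa => hs.1.1 a (hle _ _ haa), fun a b c hab hbc => ?_⟩, hs, hle⟩
  exact prefixAx_prefixClosure _ _ _ (hle _ _ hab) hbc

theorem not_rel_of_prefixClosure {q : α → α → Prop} (hs : StrictPartialRel s)
    (hrq : ∀ a b, Relation.Comp r q a b → s a b) {a b : α} (hab : prefixClosure s r a b) :
    ¬ q b a := by
  obtain ⟨c, hac, hcb⟩ := hab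
  intro hba
  have hca : s c a := hrq _ _ ⟨b, hcb, hba⟩
  cases hac with
  | refl => exact hs.1 _ hca
  | single hac => exact hs.1 _ (hs.2 _ _ _ hac hca)

end prefixClosure

theorem TxnTrace.WellFormed.retVal_of_not_cf {T X V : Type*} {τ : TxnTrace T X V}
    (hwf : τ.WellFormed) {vis arb : T → T → Prop} (hirrefl : ∀ a, ¬ vis a a)
    (hrf : ∀ a b, τ.rfR a b → vis a b) (hsto : ∀ a b, τ.stoR a b → arb a b)
    (hcf : ∀ a b, vis a b → ¬ τ.cf b a) : τ.RetVal vis arb := by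
  intro t x hx
  obtain ⟨w, hwt, -⟩ := hwf.rf_total t x hx
  obtain ⟨-, -, hxw, -⟩ := hwf.rf_wf x w t hwt
  refine ⟨w, ⟨hrf _ _ ⟨x, hwt⟩, hxw⟩, fun t' ht't hxt' hne => ?_, hwt⟩
  have hne_t : t ≠ t' := by
    rintro rfl
    exact hirrefl _ ht't
  have hnot_sto : ¬ τ.sto x w t' := fun hwt' => hcf _ _ ht't ⟨hne_t, x, w, hwt, hwt'⟩
  exact hsto _ _ ⟨x, (hwf.sto_total x t' w hxt' hxw hne).resolve_right hnot_sto⟩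

theorem pc_no_bad_cycle_imp_si_general {T X V : Type*} (τ : TxnTrace T X V)
    (hwf : τ.WellFormed)
    (hcyc : ∀ t, ¬ Relation.TransGen
      (fun a b => τ.arb0 a b ∨ ∃ c, τ.arb0 a c ∧ τ.cf c b) t t) :
    τ.IsSI := by
  obtain ⟨arb, harb, hle⟩ := exists_strictTotalRel_of_acyclic hcyc
  have harb0 : ∀ a b, τ.arb0 a b → arb a b := fun a b hab => hle a b (.inl hab)
  have hcf : ∀ a b, Relation.Comp τ.arb0 τ.cf a b → arb a b := fun a b hab => hle a b (.inr hab)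
  let vis := prefixClosure arb τ.arb0
  have hvis : ∀ a b, τ.arb0 a b → vis a b := fun _ _ => prefixClosure_of_rel
  have hgood : GoodPair vis arb := goodPair_prefixClosure harb harb0
  have := harb.1.isTrans
  have := hgood.1.isTrans
  have hpoco : τ.PoCo vis := Relation.transGen_minimal fun a b hab =>
    hvis a b (hab.imp_right .inl)
  have hcoarb : τ.CoArb arb := Relation.transGen_minimal harb0
  have hret : τ.RetVal vis arb := hwf.retVal_of_not_cf hgood.1.1
    (fun a b hab => hvis a b (.inr (.inl hab)))
    (fun a b hab => harb0 a b (.inr (.inr hab)))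
    (fun _ _ => not_rel_of_prefixClosure harb.1 hcf)
  have hconflict : τ.ConflictAx vis := fun a b hab => hvis a b (.inr (.inr hab))
  exact ⟨vis, arb, hgood, hpoco, hcoarb, hret, prefixAx_prefixClosure, hconflict⟩

/-- Lemma 5: a PC trace all of whose happens-before cycles contain
two successive `cf` dependencies (i.e. `((po ∪ rf ∪ sto) ∪ (po ∪ rf ∪ sto);cf)⁺`
is irreflexive) is SI. -/
theorem pc_no_bad_cycle_imp_si {T X V : Type*} [Fintype T] (τ : TxnTrace T X V)
    (hwf : τ.WellFormed) (hpc : τ.IsPC)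
    (hcyc : ∀ t, ¬ Relation.TransGen
      (fun a b => τ.arb0 a b ∨ ∃ c, τ.arb0 a c ∧ τ.cf c b) t t) :
    τ.IsSI :=
  pc_no_bad_cycle_imp_si_general τ hwf hcyc
end

section
/- If a trace τ over (T,X,V) is SI, then the transitive closure of (po ∪ rf ∪ sto) ∪ ((po ∪ rf ∪ sto) ; cf) is irreflexive (equivalently: every happens-before cycle of τ contains two successive cf dependencies). (Lemma 6 of the paper.) -/
open scoped Classical

/-!
An `arb0` edge is visible, by PoCo and Conflict. A conflict edge `(c, b)` forbids `vis b c`: the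
source `w` of the read of `c` is the `arb`-greatest visible writer, whereas `arb w b`. Hence, if
`arb0 a c` and `cf c b`, then `c` sees `a` but not `b`; the transactions that `c` sees form an
`arb`-initial segment by Prefix, so `arb a b`. Every edge of the relation therefore increases the
strict order `arb`, which excludes cycles.
-/

theorem StrictPartialRel.not_transGen_self {α : Type*} {r s : α → α → Prop}
    (hr : StrictPartialRel r) (hsr : ∀ a b, s a b → r a b) (a : α) :
    ¬ Relation.TransGen s a a := by
  have : IsTrans α r := ⟨hr.2⟩
  exact fun h => hr.1 a (Relation.transGen_minimal hsr a a h)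

theorem PrefixAx.arb_of_vis_of_not_vis {α : Type*} {vis arb : α → α → Prop}
    (hprefix : PrefixAx vis arb) (htotal : ∀ a b, a ≠ b → arb a b ∨ arb b a) {a b c : α}
    (hac : vis a c) (hbc : ¬ vis b c) : arb a b := by
  have hne : a ≠ b := fun h => hbc (h ▸ hac)
  exact (htotal a b hne).resolve_right fun hba => hbc (hprefix b a c hba hac)

namespace TxnTrace

variable {T X V : Type*} {τ : TxnTrace T X V} {vis arb : T → T → Prop}

theorem PoCo.vis_of_arb0 (hpoco : τ.PoCo vis) (hconflict : τ.ConflictAx vis) {a b : T}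
    (hab : τ.arb0 a b) : vis a b := by
  rcases hab with hpo | hrf | hsto
  · exact hpoco a b (.single (.inl hpo))
  · exact hpoco a b (.single (.inr hrf))
  · exact hconflict a b hsto

theorem CoArb.arb_of_arb0 (hcoarb : τ.CoArb arb) {a b : T} (hab : τ.arb0 a b) : arb a b :=
  hcoarb a b (.single hab)

theorem RetVal.arb_of_rf (hret : τ.RetVal vis arb) (hwf : τ.WellFormed) {x : X} {w t t' : T}
    (hrf : τ.rf x w t) (hvis : vis t' t) (hwrites : x ∈ τ.WS t') (hne : t' ≠ w) : arb t' w := by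
  have hreads : x ∈ τ.RS t := (hwf.rf_wf x w t hrf).2.1
  obtain ⟨w', -, hgreatest, hrf'⟩ := hret t x hreads
  obtain rfl : w' = w := (hwf.rf_total t x hreads).unique hrf' hrf
  exact hgreatest t' hvis hwrites hne

theorem RetVal.not_vis_of_cf (hret : τ.RetVal vis arb) (hwf : τ.WellFormed)
    (harb : StrictPartialRel arb) (hcoarb : τ.CoArb arb) {c b : T} (hcb : τ.cf c b) :
    ¬ vis b c := by
  intro hvis
  obtain ⟨-, x, w, hrf, hsto⟩ := hcb
  have hne : b ≠ w := fun h => hwf.sto_irrefl x w (h ▸ hsto)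
  have hbw : arb b w := hret.arb_of_rf hwf hrf hvis (hwf.sto_dom x w b hsto).2 hne
  have hwb : arb w b := hcoarb.arb_of_arb0 (.inr (.inr ⟨x, hsto⟩))
  exact harb.1 b (harb.2 b w b hbw hwb)

end TxnTrace

theorem si_no_bad_cycle_general {T X V : Type*} (τ : TxnTrace T X V)
    (hwf : τ.WellFormed) (hsi : τ.IsSI) :
    ∀ t, ¬ Relation.TransGen
      (fun a b => τ.arb0 a b ∨ ∃ c, τ.arb0 a c ∧ τ.cf c b) t t := by
  obtain ⟨vis, arb, ⟨-, ⟨harb, htotal⟩, -⟩, hpoco, hcoarb, hret, hprefix, hconflict⟩ := hsi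
  apply harb.not_transGen_self
  rintro a b (hab | ⟨c, hac, hcb⟩)
  · exact hcoarb.arb_of_arb0 hab
  · have hvis : vis a c := hpoco.vis_of_arb0 hconflict hac
    have hnvis : ¬ vis b c := hret.not_vis_of_cf hwf harb hcoarb hcb
    exact hprefix.arb_of_vis_of_not_vis htotal hvis hnvis

/-- Lemma 6: in an SI trace, every happens-before cycle contains
two successive `cf` dependencies, i.e. `((po ∪ rf ∪ sto) ∪ (po ∪ rf ∪ sto);cf)⁺`
is irreflexive. -/
theorem si_no_bad_cycle {T X V : Type*} [Fintype T] (τ : TxnTrace T X V)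
    (hwf : τ.WellFormed) (hsi : τ.IsSI) :
    ∀ t, ¬ Relation.TransGen
      (fun a b => τ.arb0 a b ∨ ∃ c, τ.arb0 a c ∧ τ.cf c b) t t :=
  si_no_bad_cycle_general τ hwf hsi
end
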